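/- For every a ∈ ℕ and every n ∈ ℕ, the polynomials P_n(X) = ∑_{k=0}^{n} ((ak)!/k!) X^k and P_{n+1}(X) = ∑_{k=0}^{n+1} ((ak)!/k!) X^k have no common zero in ℂ. -/

import Mathlib

open Polynomial

/-- `P n = ∑_{k=0}^{n} ((a·k)!/k!) Xᵏ ∈ ℂ[X]` (depending on a parameter `a ∈ ℕ`). -/
noncomputable def P (a n : ℕ) : Polynomial ℂ :=
  ∑ k ∈ Finset.range (n + 1), C (((a * k).factorial : ℂ) / (k.factorial : ℂ)) * X ^ k

/-! Two consecutive truncations of a power series differ by a single monomial, so a common zero can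
only be `0`, where the larger truncation takes the value of the constant coefficient. -/

section Truncation

open PowerSeries

variable {R : Type*} [Semiring R]

theorem eval_trunc_succ (f : R⟦X⟧) (n : ℕ) (x : R) :
    (trunc (n + 1) f).eval x = (trunc n f).eval x + coeff n f * x ^ n := by
  rw [trunc_succ, eval_add, eval_monomial]

theorem eval_zero_trunc_succ (f : R⟦X⟧) (n : ℕ) :
    (trunc (n + 1) f).eval 0 = constantCoeff f := by
  rw [← Polynomial.coeff_zero_eq_eval_zero, coeff_trunc, if_pos n.succ_pos,
    coeff_zero_eq_constantCoeff_apply]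

theorem not_isRoot_trunc_succ_of_isRoot_trunc [NoZeroDivisors R] {f : R⟦X⟧} {n : ℕ} {x : R}
    (hf : constantCoeff f ≠ 0) (hn : coeff n f ≠ 0) (hx : (trunc n f).IsRoot x) :
    ¬ (trunc (n + 1) f).IsRoot x := by
  intro hx'
  have hmonomial : coeff n f * x ^ n = 0 := by
    rw [← hx'.eq_zero, eval_trunc_succ, hx.eq_zero, zero_add]
  obtain rfl : x = 0 := eq_zero_of_pow_eq_zero ((mul_eq_zero.mp hmonomial).resolve_left hn)
  exact hf (eval_zero_trunc_succ f n ▸ hx'.eq_zero)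

end Truncation

/-- The formal power series `∑ ((a·k)!/k!) Xᵏ` whose truncations are the polynomials `P a n`. -/
noncomputable def factorialRatioSeries (a : ℕ) : PowerSeries ℂ :=
  PowerSeries.mk fun k ↦ ((a * k).factorial : ℂ) / (k.factorial : ℂ)

theorem P_eq_trunc (a n : ℕ) : P a n = PowerSeries.trunc (n + 1) (factorialRatioSeries a) := by
  simp only [P, factorialRatioSeries, PowerSeries.trunc_apply, PowerSeries.coeff_mk,
    C_mul_X_pow_eq_monomial, Nat.Ico_zero_eq_range]

theorem coeff_factorialRatioSeries_ne_zero (a k : ℕ) :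
    PowerSeries.coeff k (factorialRatioSeries a) ≠ 0 := by
  rw [factorialRatioSeries, PowerSeries.coeff_mk]
  exact div_ne_zero (Nat.cast_ne_zero.mpr (Nat.factorial_ne_zero _))
    (Nat.cast_ne_zero.mpr (Nat.factorial_ne_zero _))

theorem stmt_17 (a n : ℕ) :
    ¬ ∃ x : ℂ, (P a n).eval x = 0 ∧ (P a (n + 1)).eval x = 0 := by
  rintro ⟨x, hx, hx'⟩
  rw [P_eq_trunc] at hx hx'
  have hconst : PowerSeries.constantCoeff (factorialRatioSeries a) ≠ 0 := by
    rw [← PowerSeries.coeff_zero_eq_constantCoeff_apply]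
    exact coeff_factorialRatioSeries_ne_zero a 0
  exact not_isRoot_trunc_succ_of_isRoot_trunc hconst
    (coeff_factorialRatioSeries_ne_zero a (n + 1)) hx hx'
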